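/- Let μ ∈ 𝒲_1(Q), where Q = [−1,1]² with the maximum metric. Then d_{W_1}(δ_{(−1,−1)}, μ) + d_{W_1}(μ, δ_{(1,1)}) ≥ 2, with equality if and only if supp(μ) ⊆ L₊ = {(t,t) : t ∈ [−1,1]}. -/

import Mathlib

open MeasureTheory

/-- The `p`-Wasserstein distance between two measures, defined as the infimum over all
couplings `π` of `μ` and `ν` of `(∬ d(x,y)^p dπ)^(1/p)`. -/
noncomputable def Wdist {X : Type*} [MeasurableSpace X] [PseudoMetricSpace X] (p : ℝ)
    (μ ν : Measure X) : ℝ :=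
  (⨅ π ∈ {π : Measure (X × X) | π.map Prod.fst = μ ∧ π.map Prod.snd = ν},
    (∫⁻ q, edist q.1 q.2 ^ p ∂π) ^ (1 / p)).toReal

/-- The `p`-Wasserstein space over `X`: Borel probability measures on `X` with finite
`p`-th moment. -/
def WSet (X : Type*) [MeasurableSpace X] [PseudoMetricSpace X] (p : ℝ) : Set (Measure X) :=
  {μ | IsProbabilityMeasure μ ∧ ∃ x₀ : X, ∫⁻ x, edist x x₀ ^ p ∂μ < ⊤}

/-- An isometry of the underlying metric space: a distance-preserving bijection. -/
def IsIsom {X : Type*} [PseudoMetricSpace X] (T : X → X) : Prop :=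
  Function.Bijective T ∧ ∀ x y, dist (T x) (T y) = dist x y

/-- An isometry of the `p`-Wasserstein space over `X`: a bijection of the space of
probability measures with finite `p`-th moment preserving the Wasserstein distance. -/
def IsWIsometry (X : Type*) [MeasurableSpace X] [PseudoMetricSpace X] (p : ℝ)
    (Φ : Measure X → Measure X) : Prop :=
  Set.BijOn Φ (WSet X p) (WSet X p) ∧
    ∀ μ ∈ WSet X p, ∀ ν ∈ WSet X p, Wdist p (Φ μ) (Φ ν) = Wdist p μ ν

/-- The (topological) support of a measure. -/
def msupport {X : Type*} [TopologicalSpace X] [MeasurableSpace X] (μ : Measure X) : Set X :=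
  {x | ∀ U : Set X, IsOpen U → x ∈ U → μ U ≠ 0}

def diagLine (ε a : ℝ) : Set (ℝ × ℝ) := {z | z.2 = ε * z.1 + a}

def Lplus : Set (ℝ × ℝ) := {z | z.2 = z.1}

def Lminus : Set (ℝ × ℝ) := {z | z.2 = -z.1}

/-- The closed square `Q = [-1,1]²`. -/
abbrev Qs : Set (ℝ × ℝ) := Set.Icc (-1, -1) (1, 1)

def LplusQ : Set ↥Qs := {q | (q : ℝ × ℝ).2 = (q : ℝ × ℝ).1}

def LminusQ : Set ↥Qs := {q | (q : ℝ × ℝ).2 = -(q : ℝ × ℝ).1}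


/-- The four corners of `Q = [-1,1]²`. -/
def cLL : ↥Qs := ⟨(-1, -1), by constructor <;> simp [Prod.le_def]⟩
def cLR : ↥Qs := ⟨(1, -1), by constructor <;> simp [Prod.le_def]⟩
def cUR : ↥Qs := ⟨(1, 1), by constructor <;> simp [Prod.le_def]⟩
def cUL : ↥Qs := ⟨(-1, 1), by constructor <;> simp [Prod.le_def]⟩


theorem aux_inf_left (μ : Measure ↥Qs) [IsProbabilityMeasure μ] (a : ↥Qs) :
    Wdist 1 (Measure.dirac a) μ = ∫ x, dist a x ∂μ := by
  have hc : Measurable (fun q : ↥Qs × ↥Qs => edist q.1 q.2) := by fun_prop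
  have hI : ∫ x, dist a x ∂μ = (∫⁻ x, edist a x ∂μ).toReal := by
    rw [integral_eq_lintegral_of_nonneg_ae (Filter.Eventually.of_forall fun x => dist_nonneg)
      (by fun_prop)]
    simp only [edist_dist]
  rw [hI, Wdist]
  congr 1
  apply le_antisymm
  · refine (iInf₂_le (μ.map (fun x => (a, x))) ?_).trans ?_
    · constructor
      · rw [Measure.map_map (by fun_prop) (by fun_prop)]
        change Measure.map (fun _ => a) μ = _
        simp [Measure.map_const]
      · rw [Measure.map_map (by fun_prop) (by fun_prop)]
        exact Measure.map_id
    · simp only [ENNReal.rpow_one, div_one]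
      rw [lintegral_map hc (by fun_prop)]
  · refine le_iInf₂ fun π hπ => ?_
    obtain ⟨h1, h2⟩ := hπ
    simp only [ENNReal.rpow_one, div_one]
    have h : ∀ᵐ q ∂π, q.1 = a := by
      refine ae_of_ae_map (p := fun x => x = a) (f := Prod.fst) measurable_fst.aemeasurable ?_
      rw [h1, ae_dirac_eq]
      rfl
    rw [← h2, lintegral_map (by fun_prop) measurable_snd]
    refine (lintegral_congr_ae ?_).le
    filter_upwards [h] with q hq
    rw [hq]

theorem aux_inf_right (μ : Measure ↥Qs) [IsProbabilityMeasure μ] (a : ↥Qs) :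
    Wdist 1 μ (Measure.dirac a) = ∫ x, dist x a ∂μ := by
  have hc : Measurable (fun q : ↥Qs × ↥Qs => edist q.1 q.2) := by fun_prop
  have hI : ∫ x, dist x a ∂μ = (∫⁻ x, edist x a ∂μ).toReal := by
    rw [integral_eq_lintegral_of_nonneg_ae (Filter.Eventually.of_forall fun x => dist_nonneg)
      (by fun_prop)]
    simp only [edist_dist]
  rw [hI, Wdist]
  congr 1
  apply le_antisymm
  · refine (iInf₂_le (μ.map (fun x => (x, a))) ?_).trans ?_
    · constructor
      · rw [Measure.map_map (by fun_prop) (by fun_prop)]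
        exact Measure.map_id
      · rw [Measure.map_map (by fun_prop) (by fun_prop)]
        change Measure.map (fun _ => a) μ = _
        simp [Measure.map_const]
    · simp only [ENNReal.rpow_one, div_one]
      rw [lintegral_map hc (by fun_prop)]
  · refine le_iInf₂ fun π hπ => ?_
    obtain ⟨h1, h2⟩ := hπ
    simp only [ENNReal.rpow_one, div_one]
    have h : ∀ᵐ q ∂π, q.2 = a := by
      refine ae_of_ae_map (p := fun x => x = a) (f := Prod.snd) measurable_snd.aemeasurable ?_
      rw [h2, ae_dirac_eq]
      rfl
    rw [← h1, lintegral_map (by fun_prop) measurable_fst]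
    refine (lintegral_congr_ae ?_).le
    filter_upwards [h] with q hq
    rw [hq]

theorem aux_dist (x : ↥Qs) :
    dist cLL x + dist x cUR = 2 + |(x : ℝ × ℝ).2 - (x : ℝ × ℝ).1| := by
  obtain ⟨⟨s, t⟩, h1, h2⟩ := x
  simp only [Prod.le_def] at h1 h2
  obtain ⟨h3, h4⟩ := h1
  obtain ⟨h5, h6⟩ := h2
  simp only [Subtype.dist_eq, cLL, cUR, Prod.dist_eq, Real.dist_eq] at *
  grind

theorem aux_supp (μ : Measure ↥Qs) : msupport μ ⊆ LplusQ ↔ μ LplusQᶜ = 0 := by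
  have hcl : IsClosed LplusQ := isClosed_eq (by fun_prop) (by fun_prop)
  constructor
  · intro h
    refine measure_null_of_locally_null _ fun x hx => ?_
    have hx' : x ∉ msupport μ := fun h' => hx (h h')
    simp only [msupport, Set.mem_ofPred_eq, not_forall, not_not] at hx'
    obtain ⟨U, hU, hxU, h0⟩ := hx'
    exact ⟨U, mem_nhdsWithin_of_mem_nhds (hU.mem_nhds hxU), h0⟩
  · intro h x hx
    by_contra hn
    exact hx _ hcl.isOpen_compl hn h

/-- For `μ ∈ 𝒲₁(Q, d_m)`, `d_{W₁}(δ_{(-1,-1)}, μ) + d_{W₁}(μ, δ_{(1,1)}) ≥ 2`, with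
equality if and only if `μ` is supported on the main diagonal `L₊` of `Q`. -/
theorem W1_Q_diagonal_characterization (μ : Measure ↥Qs) (hμ : μ ∈ WSet ↥Qs 1) :
    2 ≤ Wdist 1 (Measure.dirac cLL) μ + Wdist 1 μ (Measure.dirac cUR) ∧
    (Wdist 1 (Measure.dirac cLL) μ + Wdist 1 μ (Measure.dirac cUR) = 2 ↔
      msupport μ ⊆ LplusQ) := by
  have : IsProbabilityMeasure μ := hμ.1
  have hintegrable : ∀ f : ↥Qs → ℝ, Continuous f → Integrable f μ := fun f hf =>
    hf.integrable_of_hasCompactSupport (HasCompactSupport.of_compactSpace f)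
  have key : Wdist 1 (Measure.dirac cLL) μ + Wdist 1 μ (Measure.dirac cUR)
      = 2 + ∫ x : ↥Qs, |(x : ℝ × ℝ).2 - (x : ℝ × ℝ).1| ∂μ := by
    rw [aux_inf_left, aux_inf_right,
      ← integral_add (hintegrable _ (by fun_prop)) (hintegrable _ (by fun_prop))]
    simp only [aux_dist]
    rw [integral_add (hintegrable _ (by fun_prop)) (hintegrable _ (by fun_prop))]
    simp
  have h0 : 0 ≤ ∫ x : ↥Qs, |(x : ℝ × ℝ).2 - (x : ℝ × ℝ).1| ∂μ :=
    integral_nonneg fun x => abs_nonneg _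
  refine ⟨by linarith, ?_⟩
  rw [key, aux_supp, add_eq_left, integral_eq_zero_iff_of_nonneg (fun x => abs_nonneg _)
    (hintegrable _ (by fun_prop)), Filter.EventuallyEq, ae_iff]
  have hs : {x : ↥Qs | ¬ |(x : ℝ × ℝ).2 - (x : ℝ × ℝ).1| = (0 : ↥Qs → ℝ) x} = LplusQᶜ := by
    ext x
    simp [LplusQ, sub_eq_zero]
  rw [hs]
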